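/- For every n ≥ 0 and every real number x > 0, the matrix M_n(x) := x·AM_n + (1−x)·BM_n is invertible, its inverse has (I,J) entry nonzero if and only if J ⊆ I, and for J ⊆ I, (M_n(x)^{−1})_{I,J} = (−1)^{|J|} ∏_{i ∈ I} d_{I,J,x}(i)/e_{I,J,x}(i), where the runs of I are I_1, …, I_t and, for i in a run I_k: if n ∉ I_k then d_{I,J,x}(i) = max(I_k) − i + 1 when i ∈ J and d_{I,J,x}(i) = 1 otherwise, and e_{I,J,x}(i) = max(I_k) − i + 2; if n ∈ I_k then d_{I,J,x}(i) = (max(I_k) − i)·x + 1 when i ∈ J and d_{I,J,x}(i) = x otherwise, and e_{I,J,x}(i) = (max(I_k) − i + 1)·x + 1. -/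

import Mathlib

/-!
Split the subsets of `[n+1]` according to whether they contain the top element. In this block form
the Möbius matrix is `[[M, -M], [0, M]]`, so that
`A_{n+1} M_{n+1} = [[AM, 0], [AM, -AM - BM]]` and `B_{n+1} M_{n+1} = [[AM, 0], [0, -BM]]`, whence
`M_{n+1}(x) = [[M_n(1), 0], [x • M_n(1), -(1 + x) • M_n(x')]]` with `x' = x / (1 + x)`.
A block lower triangular matrix is inverted blockwise, and since `M_n(1)` cancels in the lower left
corner this gives
`M_{n+1}(x)⁻¹ = [[M_n(1)⁻¹, 0], [x' • M_n(x')⁻¹, -(1 + x)⁻¹ • M_n(x')⁻¹]]`.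
The matrix defined by this recursion is `invMat`; `pencil_mul_invMat` is the verification.

It remains to see that the product formula obeys the same recursion. If the top element `n + 1`
is not in `I`, no run contains it, and the factors of runs through `n` at parameter `1` are the
generic ones (`runFactor_one`). If it is in `I`, it contributes the factor `1 / (1 + x)` or `x'`, it
prolongs the run through `n` (if any) by one, and the factors along that run at parameter `x` are
those of the shorter run at parameter `x'` (`runFactor_succ`).
-/

open Finset

/-- Restriction of a subset of `Fin (n+1)` to `Fin n` (forgetting the top element). -/
def resSet {n : ℕ} (I : Finset (Fin (n + 1))) : Finset (Fin n) :=
  Finset.univ.filter (fun j : Fin n => Fin.castSucc j ∈ I)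

mutual
  /-- The matrix `A_n`, rows/columns indexed by subsets of `{1,…,n}` (element `j`
  of `[n]` corresponds to `j-1 : Fin n`, i.e. anti-lexicographic/binary order). -/
  def Amat : (n : ℕ) → Matrix (Finset (Fin n)) (Finset (Fin n)) ℤ
    | 0 => Matrix.of fun _ _ => 1
    | n + 1 => Matrix.of fun I J =>
        if Fin.last n ∈ I then
          if Fin.last n ∈ J then - Bmat n (resSet I) (resSet J)
          else Amat n (resSet I) (resSet J)
        else Amat n (resSet I) (resSet J)
  /-- The matrix `B_n`. -/
  def Bmat : (n : ℕ) → Matrix (Finset (Fin n)) (Finset (Fin n)) ℤ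
    | 0 => Matrix.of fun _ _ => 1
    | n + 1 => Matrix.of fun I J =>
        if Fin.last n ∈ I then
          if Fin.last n ∈ J then - Bmat n (resSet I) (resSet J)
          else 0
        else Amat n (resSet I) (resSet J)
end

/-- The Walsh-Hadamard matrix `H_n`. -/
def Hmat : (n : ℕ) → Matrix (Finset (Fin n)) (Finset (Fin n)) ℤ
  | 0 => Matrix.of fun _ _ => 1
  | n + 1 => Matrix.of fun I J =>
      if Fin.last n ∈ I ∧ Fin.last n ∈ J then - Hmat n (resSet I) (resSet J)
      else Hmat n (resSet I) (resSet J)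

/-- The Möbius matrix `M_n` of the boolean lattice. -/
def Mobmat (n : ℕ) : Matrix (Finset (Fin n)) (Finset (Fin n)) ℤ :=
  Matrix.of fun I J => if I ⊆ J then (-1) ^ (J \ I).card else 0

/-- The zeta matrix `Z_n` of the boolean lattice. -/
def Zetamat (n : ℕ) : Matrix (Finset (Fin n)) (Finset (Fin n)) ℤ :=
  Matrix.of fun I J => if I ⊆ J then 1 else 0

/-- The subset of `[n] = {1,…,n}` corresponding to a subset of `Fin n`. -/
def natSet {n : ℕ} (I : Finset (Fin n)) : Finset ℕ := Finset.image (fun j : Fin n => (j : ℕ) + 1) I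

/-- The ordinal number of a subset in the anti-lexicographic order. -/
def ordFin {n : ℕ} (I : Finset (Fin n)) : ℕ := ∑ j ∈ I, 2 ^ (j : ℕ)

/-- The run (maximal interval of consecutive integers) of `I` containing `j`
(empty if `j ∉ I`). -/
def runOf (I : Finset ℕ) (j : ℕ) : Finset ℕ :=
  I.filter (fun i => ∀ k ∈ Finset.Icc (min i j) (max i j), k ∈ I)

/-- The set of runs (maximal intervals of consecutive integers) of `I`. -/
def runsOf (I : Finset ℕ) : Finset (Finset ℕ) := I.image (runOf I)

/-- `P` is a prefix of the interval `R`: it consists of an initial segment of `R`. -/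
def IsPrefixOf (P R : Finset ℕ) : Prop :=
  P ⊆ R ∧ ∀ i ∈ R, ∀ j ∈ P, i ≤ j → i ∈ P

/-! ### Block decomposition -/

/-- A subset of `Fin n` viewed as a subset of `Fin (n + 1)` without the top element. -/
def lowSet {n : ℕ} (S : Finset (Fin n)) : Finset (Fin (n + 1)) := S.map Fin.castSuccEmb

/-- A subset of `Fin n` with the top element of `Fin (n + 1)` adjoined. -/
def highSet {n : ℕ} (S : Finset (Fin n)) : Finset (Fin (n + 1)) := insert (Fin.last n) (lowSet S)

@[simp] lemma last_notMem_lowSet {n : ℕ} (S : Finset (Fin n)) : Fin.last n ∉ lowSet S := by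
  simp [lowSet, Fin.castSucc_ne_last]

@[simp] lemma last_mem_highSet {n : ℕ} (S : Finset (Fin n)) : Fin.last n ∈ highSet S := by
  simp [highSet]

@[simp] lemma castSucc_mem_lowSet {n : ℕ} (S : Finset (Fin n)) (j : Fin n) :
    j.castSucc ∈ lowSet S ↔ j ∈ S := by
  simp [lowSet]

@[simp] lemma castSucc_mem_highSet {n : ℕ} (S : Finset (Fin n)) (j : Fin n) :
    j.castSucc ∈ highSet S ↔ j ∈ S := by
  simp [highSet, Fin.castSucc_ne_last]

@[simp] lemma resSet_lowSet {n : ℕ} (S : Finset (Fin n)) : resSet (lowSet S) = S := by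
  ext j; simp [resSet]

@[simp] lemma resSet_highSet {n : ℕ} (S : Finset (Fin n)) : resSet (highSet S) = S := by
  ext j; simp [resSet]

lemma lowSet_resSet {n : ℕ} {I : Finset (Fin (n + 1))} (h : Fin.last n ∉ I) :
    lowSet (resSet I) = I := by
  ext j
  induction j using Fin.lastCases with
  | last => simp [h]
  | cast j => simp [resSet]

lemma highSet_resSet {n : ℕ} {I : Finset (Fin (n + 1))} (h : Fin.last n ∈ I) :
    highSet (resSet I) = I := by
  ext j
  induction j using Fin.lastCases with
  | last => simp [h]
  | cast j => simp [resSet]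

/-- Subsets of `Fin (n + 1)`, split into those without (`inl`) and with (`inr`) the top element. -/
def splitTop (n : ℕ) : Finset (Fin n) ⊕ Finset (Fin n) ≃ Finset (Fin (n + 1)) where
  toFun := Sum.elim lowSet highSet
  invFun I := if Fin.last n ∈ I then Sum.inr (resSet I) else Sum.inl (resSet I)
  left_inv s := by rcases s with s | s <;> simp
  right_inv I := by
    by_cases h : Fin.last n ∈ I
    · simp [h, highSet_resSet]
    · simp [h, lowSet_resSet]

@[simp] lemma splitTop_inl {n : ℕ} (S : Finset (Fin n)) : splitTop n (Sum.inl S) = lowSet S := rfl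
@[simp] lemma splitTop_inr {n : ℕ} (S : Finset (Fin n)) : splitTop n (Sum.inr S) = highSet S := rfl

lemma Amat_blocks (n : ℕ) : (Amat (n + 1)).submatrix (splitTop n) (splitTop n) =
    Matrix.fromBlocks (Amat n) (Amat n) (Amat n) (-Bmat n) := by
  ext (I | I) (J | J) <;> simp [Amat]

lemma Bmat_blocks (n : ℕ) : (Bmat (n + 1)).submatrix (splitTop n) (splitTop n) =
    Matrix.fromBlocks (Amat n) (Amat n) 0 (-Bmat n) := by
  ext (I | I) (J | J) <;> simp [Bmat]

lemma lowSet_subset_lowSet {n : ℕ} {I J : Finset (Fin n)} : lowSet I ⊆ lowSet J ↔ I ⊆ J :=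
  Finset.map_subset_map

lemma lowSet_subset_highSet {n : ℕ} {I J : Finset (Fin n)} : lowSet I ⊆ highSet J ↔ I ⊆ J := by
  rw [highSet, Finset.subset_insert_iff_of_notMem (last_notMem_lowSet I), lowSet_subset_lowSet]

lemma highSet_subset_highSet {n : ℕ} {I J : Finset (Fin n)} :
    highSet I ⊆ highSet J ↔ I ⊆ J := by
  rw [highSet, Finset.insert_subset_iff, lowSet_subset_highSet]
  simp

lemma not_highSet_subset_lowSet {n : ℕ} {I J : Finset (Fin n)} : ¬ highSet I ⊆ lowSet J :=
  fun h => last_notMem_lowSet J (h (last_mem_highSet I))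

lemma lowSet_sdiff_lowSet {n : ℕ} (I J : Finset (Fin n)) :
    lowSet J \ lowSet I = lowSet (J \ I) := by
  ext j; induction j using Fin.lastCases <;> simp

lemma highSet_sdiff_lowSet {n : ℕ} (I J : Finset (Fin n)) :
    highSet J \ lowSet I = highSet (J \ I) := by
  ext j; induction j using Fin.lastCases <;> simp

lemma highSet_sdiff_highSet {n : ℕ} (I J : Finset (Fin n)) :
    highSet J \ highSet I = lowSet (J \ I) := by
  ext j; induction j using Fin.lastCases <;> simp

@[simp] lemma card_lowSet {n : ℕ} (S : Finset (Fin n)) : (lowSet S).card = S.card :=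
  Finset.card_map _

@[simp] lemma card_highSet {n : ℕ} (S : Finset (Fin n)) : (highSet S).card = S.card + 1 := by
  rw [highSet, Finset.card_insert_of_notMem (last_notMem_lowSet S), card_lowSet]

lemma Mobmat_blocks (n : ℕ) : (Mobmat (n + 1)).submatrix (splitTop n) (splitTop n) =
    Matrix.fromBlocks (Mobmat n) (-Mobmat n) 0 (Mobmat n) := by
  ext (I | I) (J | J)
  · simp [Mobmat, lowSet_subset_lowSet, lowSet_sdiff_lowSet]
  · by_cases h : I ⊆ J <;>
      simp [Mobmat, lowSet_subset_highSet, highSet_sdiff_lowSet, pow_succ, h]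
  · simp [Mobmat, not_highSet_subset_lowSet]
  · simp [Mobmat, highSet_subset_highSet, highSet_sdiff_highSet]

lemma AM_blocks (n : ℕ) : (Amat (n + 1) * Mobmat (n + 1)).submatrix (splitTop n) (splitTop n) =
    Matrix.fromBlocks (Amat n * Mobmat n) 0
      (Amat n * Mobmat n) (-(Amat n * Mobmat n) - Bmat n * Mobmat n) := by
  rw [← Matrix.submatrix_mul_equiv _ _ _ (splitTop n), Amat_blocks, Mobmat_blocks,
    Matrix.fromBlocks_multiply]
  simp [sub_eq_add_neg]

lemma BM_blocks (n : ℕ) : (Bmat (n + 1) * Mobmat (n + 1)).submatrix (splitTop n) (splitTop n) =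
    Matrix.fromBlocks (Amat n * Mobmat n) 0 0 (-(Bmat n * Mobmat n)) := by
  rw [← Matrix.submatrix_mul_equiv _ _ _ (splitTop n), Bmat_blocks, Mobmat_blocks,
    Matrix.fromBlocks_multiply]
  simp

/-! ### The recursive inverse -/

/-- The matrix `M_n(x) = x·AM_n + (1 - x)·BM_n`. -/
noncomputable def pencil (n : ℕ) (x : ℝ) : Matrix (Finset (Fin n)) (Finset (Fin n)) ℝ :=
  x • ((Amat n * Mobmat n).map (Int.cast : ℤ → ℝ)) +
    (1 - x) • ((Bmat n * Mobmat n).map (Int.cast : ℤ → ℝ))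

lemma pencil_blocks (n : ℕ) {x : ℝ} (hx : 0 < x) :
    (pencil (n + 1) x).submatrix (splitTop n) (splitTop n) =
      Matrix.fromBlocks (pencil n 1) 0 (x • pencil n 1) (-(1 + x) • pencil n (x / (1 + x))) := by
  have hA := fun i j => congrFun (congrFun (AM_blocks n) i) j
  have hB := fun i j => congrFun (congrFun (BM_blocks n) i) j
  simp only [Matrix.submatrix_apply] at hA hB
  have h1 : 1 + x ≠ 0 := by positivity
  ext (I | I) (J | J) <;>
    simp only [pencil, Matrix.submatrix_apply, Matrix.add_apply, Matrix.smul_apply,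
      Matrix.map_apply, hA, hB, Matrix.fromBlocks_apply₁₁, Matrix.fromBlocks_apply₁₂,
      Matrix.fromBlocks_apply₂₁, Matrix.fromBlocks_apply₂₂, smul_eq_mul, Matrix.zero_apply,
      Matrix.neg_apply, Matrix.sub_apply] <;>
    push_cast <;> field_simp <;> ring

/-- The inverse of `M_n(x)`, defined by recursion on `n` through its block form. -/
noncomputable def invMat : (n : ℕ) → ℝ → Matrix (Finset (Fin n)) (Finset (Fin n)) ℝ
  | 0, _ => 1
  | n + 1, x => (Matrix.fromBlocks (invMat n 1) 0 ((x / (1 + x)) • invMat n (x / (1 + x)))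
      (-(1 / (1 + x)) • invMat n (x / (1 + x)))).submatrix (splitTop n).symm (splitTop n).symm

lemma invMat_blocks (n : ℕ) (x : ℝ) : (invMat (n + 1) x).submatrix (splitTop n) (splitTop n) =
    Matrix.fromBlocks (invMat n 1) 0 ((x / (1 + x)) • invMat n (x / (1 + x)))
      (-(1 / (1 + x)) • invMat n (x / (1 + x))) := by
  simp [invMat]

lemma invMat_apply (n : ℕ) (x : ℝ) (s t : Finset (Fin n) ⊕ Finset (Fin n)) :
    invMat (n + 1) x (splitTop n s) (splitTop n t) =
    Matrix.fromBlocks (invMat n 1) 0 ((x / (1 + x)) • invMat n (x / (1 + x)))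
      (-(1 / (1 + x)) • invMat n (x / (1 + x))) s t :=
  congrFun (congrFun (invMat_blocks n x) s) t

lemma pencil_mul_invMat (n : ℕ) {x : ℝ} (hx : 0 < x) : pencil n x * invMat n x = 1 := by
  induction n generalizing x with
  | zero =>
    ext I J
    simp [pencil, invMat, Amat, Bmat, Mobmat, Matrix.mul_apply, Subsingleton.elim I J,
      Finset.univ_unique, Matrix.one_apply, eq_iff_true_of_subsingleton]
  | succ n ih =>
    have h1 : 1 + x ≠ 0 := by positivity
    have ih' : pencil n (x / (1 + x)) * invMat n (x / (1 + x)) = 1 :=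
      ih (div_pos hx (by positivity))
    have key : (pencil (n + 1) x * invMat (n + 1) x).submatrix (splitTop n) (splitTop n) = 1 := by
      rw [← Matrix.submatrix_mul_equiv _ _ _ (splitTop n), pencil_blocks n hx, invMat_blocks,
        Matrix.fromBlocks_multiply]
      simp only [Matrix.smul_mul, Matrix.mul_smul, ih one_pos, ih',
        Matrix.zero_mul, Matrix.mul_zero, add_zero, zero_add, smul_zero, smul_smul, ← add_smul]
      rw [← Matrix.fromBlocks_one]
      congr 1
      · rw [show x + x / (1 + x) * -(1 + x) = 0 by field_simp; ring, zero_smul]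
      · rw [show -(1 / (1 + x)) * -(1 + x) = 1 by field_simp, one_smul]
    ext I J
    have := congrFun (congrFun key ((splitTop n).symm I)) ((splitTop n).symm J)
    simpa [Matrix.one_apply] using this

/-! ### Runs -/

lemma natSet_lowSet {n : ℕ} (S : Finset (Fin n)) : natSet (lowSet S) = natSet S := by
  simp [natSet, lowSet, Finset.map_eq_image, Finset.image_image, Function.comp_def]

lemma natSet_highSet {n : ℕ} (S : Finset (Fin n)) :
    natSet (highSet S) = insert (n + 1) (natSet S) := by
  rw [← natSet_lowSet S, natSet, highSet, Finset.image_insert]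
  simp [natSet]

lemma le_of_mem_natSet {n : ℕ} {S : Finset (Fin n)} {i : ℕ} (h : i ∈ natSet S) : i ≤ n := by
  simp only [natSet, Finset.mem_image] at h
  obtain ⟨j, -, rfl⟩ := h
  exact j.isLt

lemma runOf_subset (S : Finset ℕ) (i : ℕ) : runOf S i ⊆ S := Finset.filter_subset _ _

lemma max_getD_eq {T : Finset ℕ} {n : ℕ} (hn : n ∈ T) (hT : ∀ i ∈ T, i ≤ n) :
    T.max.getD 0 = n := by
  have : T.max = (n : WithBot ℕ) :=
    le_antisymm (Finset.max_le fun i hi => WithBot.coe_le_coe.2 (hT i hi)) (Finset.le_max hn)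
  rw [this]; rfl

lemma mem_runOf_of_le {S : Finset ℕ} {i m : ℕ} (h : i ≤ m) :
    m ∈ runOf S i ↔ ∀ k, i ≤ k → k ≤ m → k ∈ S := by
  simp only [runOf, Finset.mem_filter, min_eq_right h, max_eq_left h, Finset.mem_Icc]
  exact ⟨fun H k h1 h2 => H.2 k ⟨h1, h2⟩, fun H => ⟨H m h le_rfl, fun k hk => H k hk.1 hk.2⟩⟩

/-- Adjoining `n + 1` prolongs exactly the run that ends in `n`. -/
lemma succ_mem_runOf_insert {S : Finset ℕ} {n i : ℕ} (hi : i ≤ n) :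
    n + 1 ∈ runOf (insert (n + 1) S) i ↔ n ∈ runOf S i := by
  rw [mem_runOf_of_le hi, mem_runOf_of_le (by omega)]
  constructor
  · intro H k h1 h2
    exact Finset.mem_of_mem_insert_of_ne (H k h1 (by omega)) (by omega)
  · intro H k h1 h2
    rcases Nat.lt_or_ge n k with h | h
    · exact Finset.mem_insert.2 (Or.inl (by omega))
    · exact Finset.mem_insert_of_mem (H k h1 h)

lemma runOf_insert_of_notMem {S : Finset ℕ} {n i : ℕ} (hS : ∀ j ∈ S, j ≤ n) (hi : i ≤ n)
    (h : n ∉ runOf S i) : runOf (insert (n + 1) S) i = runOf S i := by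
  ext m
  by_cases hm : m = n + 1
  · subst hm
    refine iff_of_false (by rwa [succ_mem_runOf_insert hi]) fun H => ?_
    have := hS _ (runOf_subset _ _ H)
    omega
  · simp only [runOf, Finset.mem_filter, Finset.mem_insert, hm, false_or]
    refine and_congr_right fun hmS => forall₂_congr fun k hk => ?_
    have := hS m hmS
    have : k ≠ n + 1 := by
      have := (Finset.mem_Icc.1 hk).2
      have := max_le (hS m hmS) hi
      omega
    simp [this]

/-! ### The product formula -/

/-- The factor `d(i) / e(i)` of the product formula, for the set `S ⊆ [n]` (in the role of `I`) and
the set `T` (in the role of `J`). -/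
noncomputable def runFactor (n : ℕ) (x : ℝ) (S T : Finset ℕ) (i : ℕ) : ℝ :=
  if n ∈ runOf S i then
    (if i ∈ T then ((((runOf S i).max.getD 0 - i : ℕ) : ℝ) * x + 1) else x) /
      ((((runOf S i).max.getD 0 - i + 1 : ℕ) : ℝ) * x + 1)
  else
    (if i ∈ T then ((((runOf S i).max.getD 0 - i + 1 : ℕ) : ℝ)) else 1) /
      ((((runOf S i).max.getD 0 - i + 2 : ℕ) : ℝ))

lemma runFactor_pos (n : ℕ) {x : ℝ} (hx : 0 < x) (S T : Finset ℕ) (i : ℕ) :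
    0 < runFactor n x S T i := by
  unfold runFactor
  split_ifs <;> positivity

/-- At parameter `1` the two kinds of factors agree, so that the top index plays no role. -/
lemma runFactor_one {n m : ℕ} (x : ℝ) {S : Finset ℕ} (T : Finset ℕ) (i : ℕ) (hm : m ∉ S) :
    runFactor m x S T i = runFactor n 1 S T i := by
  have h : m ∉ runOf S i := fun h => hm (runOf_subset _ _ h)
  unfold runFactor
  rw [if_neg h]
  split_ifs <;> push_cast <;> ring

/-- The set `T` enters the factor of `i` only through the membership `i ∈ T`. -/
lemma runFactor_insert {n m i : ℕ} (x : ℝ) (S T : Finset ℕ) (hi : i ≠ m) :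
    runFactor n x S (insert m T) i = runFactor n x S T i := by
  simp [runFactor, hi]

/-- Adjoining `n + 1` to `S` amounts, on the old indices, to replacing the parameter `x / (1 + x)`
by `x`: only the run through `n` sees either change. -/
lemma runFactor_succ {n i : ℕ} {x : ℝ} (hx : 0 < x) {S : Finset ℕ} (T : Finset ℕ)
    (hS : ∀ j ∈ S, j ≤ n) (hi : i ∈ S) :
    runFactor (n + 1) x (insert (n + 1) S) T i = runFactor n (x / (1 + x)) S T i := by
  have hin := hS i hi
  by_cases h : n ∈ runOf S i
  · have h' := (succ_mem_runOf_insert (S := S) hin).2 h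
    have hmax : (runOf S i).max.getD 0 = n :=
      max_getD_eq h fun j hj => hS j (runOf_subset _ _ hj)
    have hmax' : (runOf (insert (n + 1) S) i).max.getD 0 = n + 1 := by
      refine max_getD_eq h' fun j hj => ?_
      rcases Finset.mem_insert.1 (runOf_subset _ _ hj) with rfl | hj
      · exact le_rfl
      · exact (hS j hj).trans n.le_succ
    unfold runFactor
    rw [if_pos h, if_pos h', hmax, hmax', Nat.sub_add_comm hin]
    -- Multiplying numerator and denominator by `1 + x` turns `x / (1 + x)` into `x` and
    -- raises the coefficient by one.
    have h1 : 1 + x ≠ 0 := by positivity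
    have h2 : ((n - i + 1 : ℕ) : ℝ) * (x / (1 + x)) + 1 ≠ 0 := by positivity
    have h3 : ((n - i + 1 + 1 : ℕ) : ℝ) * x + 1 ≠ 0 := by positivity
    rw [div_eq_div_iff h3 h2]
    split_ifs <;> push_cast <;> field_simp <;> ring
  · have h' := (succ_mem_runOf_insert (S := S) hin).not.2 h
    unfold runFactor
    rw [if_neg h, if_neg h', runOf_insert_of_notMem hS hin h]

lemma runFactor_top {n : ℕ} (x : ℝ) {S : Finset ℕ} (T : Finset ℕ) (hS : ∀ j ∈ S, j ≤ n) :
    runFactor (n + 1) x (insert (n + 1) S) T (n + 1) =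
      (if n + 1 ∈ T then 1 else x) / (1 + x) := by
  have h : n + 1 ∈ runOf (insert (n + 1) S) (n + 1) := by
    rw [mem_runOf_of_le le_rfl]
    intro k h1 h2
    simp [le_antisymm h2 h1]
  have hmax : (runOf (insert (n + 1) S) (n + 1)).max.getD 0 = n + 1 := by
    refine max_getD_eq h fun j hj => ?_
    rcases Finset.mem_insert.1 (runOf_subset _ _ hj) with rfl | hj
    · exact le_rfl
    · exact (hS j hj).trans n.le_succ
  unfold runFactor
  rw [if_pos h, hmax]
  simp [add_comm]

lemma prod_runFactor_high {n : ℕ} {x : ℝ} (hx : 0 < x) {S : Finset ℕ} (T : Finset ℕ)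
    (hS : ∀ j ∈ S, j ≤ n) :
    ∏ i ∈ insert (n + 1) S, runFactor (n + 1) x (insert (n + 1) S) T i =
      (if n + 1 ∈ T then 1 else x) / (1 + x) * ∏ i ∈ S, runFactor n (x / (1 + x)) S T i := by
  have hn : n + 1 ∉ S := fun h => by have := hS _ h; omega
  rw [Finset.prod_insert hn, runFactor_top x T hS]
  congr 1
  exact Finset.prod_congr rfl fun i hi => runFactor_succ hx T hS hi

/-- The product formula satisfies the recursion defining `invMat`. -/
lemma invMat_eq (n : ℕ) {x : ℝ} (hx : 0 < x) (I J : Finset (Fin n)) :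
    invMat n x I J = if J ⊆ I then
      (-1) ^ J.card * ∏ i ∈ natSet I, runFactor n x (natSet I) (natSet J) i else 0 := by
  induction n generalizing x with
  | zero =>
    simp [invMat, Subsingleton.elim I ∅, Subsingleton.elim J ∅, natSet, Matrix.one_apply]
  | succ n ih =>
    have hx' : 0 < x / (1 + x) := by positivity
    have hle : ∀ S : Finset (Fin n), ∀ j ∈ natSet S, j ≤ n := fun S j => le_of_mem_natSet
    have hnot : ∀ S : Finset (Fin n), n + 1 ∉ natSet S := fun S h => by
      have := hle S _ h; omega
    obtain ⟨s, rfl⟩ := (splitTop n).surjective I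
    obtain ⟨t, rfl⟩ := (splitTop n).surjective J
    rw [invMat_apply]
    rcases s with I | I <;> rcases t with J | J
    · simp only [Matrix.fromBlocks_apply₁₁, splitTop_inl, ih one_pos, lowSet_subset_lowSet,
        card_lowSet, natSet_lowSet]
      simp only [runFactor_one (n := n) x (natSet J) _ (hnot I)]
    · simp [not_highSet_subset_lowSet]
    · simp only [Matrix.fromBlocks_apply₂₁, splitTop_inl, splitTop_inr, Matrix.smul_apply,
        smul_eq_mul, ih hx', lowSet_subset_highSet, card_lowSet, natSet_lowSet, natSet_highSet]
      rw [prod_runFactor_high hx _ (hle I), if_neg (hnot J)]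
      split_ifs <;> ring
    · simp only [Matrix.fromBlocks_apply₂₂, splitTop_inr, Matrix.smul_apply,
        smul_eq_mul, ih hx', highSet_subset_highSet, card_highSet, natSet_highSet]
      rw [prod_runFactor_high hx _ (hle I), if_pos (Finset.mem_insert_self _ _)]
      rw [Finset.prod_congr rfl fun i hi =>
        runFactor_insert (x / (1 + x)) (natSet I) (natSet J)
          (show i ≠ n + 1 from fun h => hnot I (h ▸ hi))]
      split_ifs <;> ring

/-- For `x > 0`, the real matrix `M_n(x) = x·AM_n + (1−x)·BM_n` is
invertible, the `(I,J)` entry of its inverse is nonzero iff `J ⊆ I`, and for `J ⊆ I`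
it equals `(−1)^{|J|} ∏_{i ∈ I} d_{I,J,x}(i)/e_{I,J,x}(i)`, where for `i` in a run
`I_k` of `I` (here `runOf (natSet I) i`, with maximum `max I_k`): if `n ∉ I_k` then
`d = max I_k − i + 1` for `i ∈ J`, `d = 1` otherwise, and `e = max I_k − i + 2`;
if `n ∈ I_k` then `d = (max I_k − i)·x + 1` for `i ∈ J`, `d = x` otherwise, and
`e = (max I_k − i + 1)·x + 1`. -/
theorem Mx_inverse (n : ℕ) (x : ℝ) (hx : 0 < x)
    (Mx : Matrix (Finset (Fin n)) (Finset (Fin n)) ℝ)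
    (hMx : Mx = x • ((Amat n * Mobmat n).map (Int.cast : ℤ → ℝ)) +
        (1 - x) • ((Bmat n * Mobmat n).map (Int.cast : ℤ → ℝ))) :
    IsUnit Mx.det ∧
    (∀ I J : Finset (Fin n), Mx⁻¹ I J ≠ 0 ↔ J ⊆ I) ∧
    (∀ I J : Finset (Fin n), J ⊆ I →
      Mx⁻¹ I J = (-1) ^ J.card *
        ∏ i ∈ natSet I,
          (if n ∈ runOf (natSet I) i then
            (if i ∈ natSet J then
                ((((runOf (natSet I) i).max.getD 0 - i : ℕ) : ℝ) * x + 1)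
              else x) /
              ((((runOf (natSet I) i).max.getD 0 - i + 1 : ℕ) : ℝ) * x + 1)
          else
            (if i ∈ natSet J then
                ((((runOf (natSet I) i).max.getD 0 - i + 1 : ℕ) : ℝ))
              else 1) /
              ((((runOf (natSet I) i).max.getD 0 - i + 2 : ℕ) : ℝ)))) := by
  have hmul : Mx * invMat n x = 1 := hMx ▸ pencil_mul_invMat n hx
  have hinv : Mx⁻¹ = invMat n x := Matrix.inv_eq_right_inv hmul
  refine ⟨Matrix.isUnit_det_of_right_inverse hmul, fun I J => ?_, fun I J hJI => ?_⟩
  · rw [hinv, invMat_eq n hx]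
    split_ifs with h
    · refine iff_of_true (mul_ne_zero (by simp) ?_) h
      exact (Finset.prod_pos fun i _ => runFactor_pos n hx _ _ i).ne'
    · simp [h]
  · rw [hinv, invMat_eq n hx, if_pos hJI]
    rfl
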